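/- The permutation action of G ≅ PGL₃(𝔽₃) on the 26 roots of the diagram D extends to an ℰ-linear action of G on L preserving the Hermitian form; that is, there is a group homomorphism G → Aut(L) under which each g ∈ G sends the root labelled by a point or line of P²(𝔽₃) to the root labelled by its image under g. -/

import Mathlib

noncomputable section

open ComplexConjugate

namespace Bimonster

/-- The primitive cube root of unity `ω = e^{2πi/3}`. -/
def ω : ℂ := Complex.exp (2 * (Real.pi : ℂ) * Complex.I / 3)

/-- `θ = ω - ω̄ = √-3`. -/
def θ : ℂ := ω - conj ω

/-- `ξ = e^{-πi/6}`. -/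
def ξ : ℂ := Complex.exp (-((Real.pi : ℂ) * Complex.I) / 6)

/-- Membership in the ring of Eisenstein integers `ℰ = ℤ[ω] ⊆ ℂ`. -/
def EisP (z : ℂ) : Prop := ∃ a b : ℤ, z = (a : ℂ) + (b : ℂ) * ω

/-- The units of the ring of Eisenstein integers. -/
def EisUnit (z : ℂ) : Prop :=
  z = 1 ∨ z = -1 ∨ z = ω ∨ z = -ω ∨ z = ω ^ 2 ∨ z = -ω ^ 2

/-- The underlying 14-dimensional complex vector space of `L = 3E₈ ⊕ H`. -/
abbrev V : Type := Fin 14 → ℂ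

/-- The Hermitian form of `L = 3E₈ ⊕ H`: negative definite standard form on the twelve
`E₈`-coordinates, and the hyperbolic cell with Gram matrix `[[0, θ̄], [θ, 0]]` on the
last two coordinates.  It is conjugate-linear in the first variable. -/
def herm (u v : V) : ℂ :=
  -(∑ i : Fin 12, conj (u (Fin.castLE (by norm_num) i)) * v (Fin.castLE (by norm_num) i)) +
    conj (u 12) * conj θ * v 13 + conj (u 13) * θ * v 12

/-- First generator of the ternary tetracode `𝒞₄ ⊆ 𝔽₃⁴`. -/
def tet1 : Fin 4 → ℤ := ![1, 1, -1, 0]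

/-- Second generator of the ternary tetracode `𝒞₄ ⊆ 𝔽₃⁴`. -/
def tet2 : Fin 4 → ℤ := ![0, 1, 1, 1]

/-- The complex `E₈` lattice: vectors of `ℰ⁴` whose reduction mod `θ` lies in the
ternary tetracode. -/
def inE8 (w : Fin 4 → ℂ) : Prop :=
  (∀ i, EisP (w i)) ∧
    ∃ s t : ℤ, ∀ i : Fin 4, ∃ a b : ℤ,
      w i - ((tet1 i * s + tet2 i * t : ℤ) : ℂ) = θ * ((a : ℂ) + (b : ℂ) * ω)

/-- The lattice `L = 3E₈ ⊕ H` as a subset of `ℂ¹⁴`. -/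
def Lset : Set V :=
  {v | (∀ k : Fin 3,
      inE8 fun i : Fin 4 =>
        v ⟨4 * (k : ℕ) + (i : ℕ), by have hk := k.isLt; have hi := i.isLt; omega⟩) ∧
    EisP (v 12) ∧ EisP (v 13)}

/-- A root of `L`: a primitive lattice vector of norm `-3`. -/
def IsRoot (r : V) : Prop :=
  r ∈ Lset ∧ herm r r = -3 ∧
    ∀ α : ℂ, EisP α → ∀ y ∈ Lset, r = α • y → EisUnit α

/-- The `μ`-reflection in a vector `r`: `v ↦ v − (1−μ)·r·⟨r,v⟩/|r|²`. -/
def reflMap (μ : ℂ) (r v : V) : V := v - ((1 - μ) * herm r v / herm r r) • r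

/-- The automorphism group of the lattice `L`: invertible `ℂ`-linear maps preserving
the lattice and the Hermitian form. -/
def AutL : Subgroup (V ≃ₗ[ℂ] V) where
  carrier := {g | (∀ v : V, v ∈ Lset ↔ g v ∈ Lset) ∧ ∀ u v : V, herm (g u) (g v) = herm u v}
  one_mem' := ⟨fun _ => Iff.rfl, fun _ _ => rfl⟩
  mul_mem' := by
    rintro f g ⟨hf1, hf2⟩ ⟨hg1, hg2⟩
    refine ⟨fun v => ?_, fun u v => ?_⟩
    · exact (hg1 v).trans (hf1 (g v))
    · exact (hf2 (g u) (g v)).trans (hg2 u v)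
  inv_mem' := by
    rintro g ⟨hg1, hg2⟩
    refine ⟨fun v => ?_, fun u v => ?_⟩
    · have h := hg1 (g.symm v)
      have hv : g (g.symm v) = v := g.apply_symm_apply v
      rw [hv] at h
      exact h.symm
    · have h := hg2 (g.symm u) (g.symm v)
      have hu : g (g.symm u) = u := g.apply_symm_apply u
      have hv : g (g.symm v) = v := g.apply_symm_apply v
      rw [hu, hv] at h
      exact h.symm

/-- The set of elements of `Aut(L)` acting as the `ω`-reflection in some root
belonging to `S`. -/
def ReflAutos (S : Set V) : Set (V ≃ₗ[ℂ] V) :=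
  {g | g ∈ AutL ∧ ∃ r ∈ S, ∀ v, g v = reflMap ω r v}

/-- The reflection group `R(L)`: the subgroup of `Aut(L)` generated by the
`ω`-reflections in all roots of `L`. -/
def RL : Subgroup (V ≃ₗ[ℂ] V) := Subgroup.closure (ReflAutos {r | IsRoot r})

/-- Two roots are adjacent when `|⟨a,b⟩| = √3`, i.e. when their `ω`-reflections braid. -/
def Adj (a b : V) : Prop := ‖herm a b‖ = Real.sqrt 3

/-- A set of roots is connected if the graph given by adjacency on it is connected. -/
def ConnectedSet (Φ : Set V) : Prop :=
  ∀ a ∈ Φ, ∀ b ∈ Φ, Relation.ReflTransGen (fun x y => x ∈ Φ ∧ y ∈ Φ ∧ Adj x y) a b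

/-- `Rad Φ` is the radical of a set `Φ` of roots: the closure of `Φ` under reflecting
members of the set in each other (and identification of unit multiples). -/
inductive Rad (Φ : Set V) : V → Prop
  | base {r : V} : r ∈ Φ → Rad Φ r
  | refl {a b : V} : Rad Φ a → Rad Φ b → Rad Φ (reflMap ω a b)
  | inv {a b : V} : Rad Φ a → Rad Φ b → Rad Φ (reflMap (conj ω) a b)
  | unit {u : ℂ} {r : V} : EisUnit u → Rad Φ r → Rad Φ (u • r)

/-- Shorthand for the entry `-θω²` occurring in the coordinates of the 26 roots. -/
def qc : ℂ := -(θ * ω ^ 2)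

/- The 26 roots of the diagram `D` in the coordinate system `3E₈ ⊕ H`. -/

def rA : V := ![0, 0, 0, 0, 0, 0, 0, 0, 0, 0, 0, 0, 1, ω ^ 2]
def rC1 : V := ![qc, 0, 0, 0, 0, 0, 0, 0, 0, 0, 0, 0, 0, 0]
def rC2 : V := ![0, 0, 0, 0, qc, 0, 0, 0, 0, 0, 0, 0, 0, 0]
def rC3 : V := ![0, 0, 0, 0, 0, 0, 0, 0, qc, 0, 0, 0, 0, 0]
def rE1 : V := ![0, qc, 0, 0, 0, 0, 0, 0, 0, 0, 0, 0, 0, 0]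
def rE2 : V := ![0, 0, 0, 0, 0, qc, 0, 0, 0, 0, 0, 0, 0, 0]
def rE3 : V := ![0, 0, 0, 0, 0, 0, 0, 0, 0, qc, 0, 0, 0, 0]
def rA1 : V := ![0, 0, 0, 0, 0, 0, 0, qc, 0, 0, 0, qc, ω, ω ^ 2]
def rA2 : V := ![0, 0, 0, qc, 0, 0, 0, 0, 0, 0, 0, qc, ω, ω ^ 2]
def rA3 : V := ![0, 0, 0, qc, 0, 0, 0, qc, 0, 0, 0, 0, ω, ω ^ 2]
def rG1 : V := ![0, 0, 0, qc, 0, 0, -qc, qc, 0, 0, -qc, qc, 2 * ω, 2 * ω ^ 2]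
def rG2 : V := ![0, 0, -qc, qc, 0, 0, 0, qc, 0, 0, -qc, qc, 2 * ω, 2 * ω ^ 2]
def rG3 : V := ![0, 0, -qc, qc, 0, 0, -qc, qc, 0, 0, 0, qc, 2 * ω, 2 * ω ^ 2]
def rF : V := ![0, 1, 1, -2, 0, 1, 1, -2, 0, 1, 1, -2, -2 + ω, -θ]
def rB1 : V := ![1, 0, 1, -1, 0, 0, 0, 0, 0, 0, 0, 0, -1, 0]
def rB2 : V := ![0, 0, 0, 0, 1, 0, 1, -1, 0, 0, 0, 0, -1, 0]
def rB3 : V := ![0, 0, 0, 0, 0, 0, 0, 0, 1, 0, 1, -1, -1, 0]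
def rD1 : V := ![1, 1, -1, 0, 0, 0, 0, 0, 0, 0, 0, 0, 0, 0]
def rD2 : V := ![0, 0, 0, 0, 1, 1, -1, 0, 0, 0, 0, 0, 0, 0]
def rD3 : V := ![0, 0, 0, 0, 0, 0, 0, 0, 1, 1, -1, 0, 0, 0]
def rF1 : V := ![0, 1, 1, 1, 0, 0, 0, 0, 0, 0, 0, 0, 0, 0]
def rF2 : V := ![0, 0, 0, 0, 0, 1, 1, 1, 0, 0, 0, 0, 0, 0]
def rF3 : V := ![0, 0, 0, 0, 0, 0, 0, 0, 0, 1, 1, 1, 0, 0]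
def rZ1 : V := ![0, 1, 1, -2, 1, 0, 1, -1, 1, 0, 1, -1, qc, -θ]
def rZ2 : V := ![1, 0, 1, -1, 0, 1, 1, -2, 1, 0, 1, -1, qc, -θ]
def rZ3 : V := ![1, 0, 1, -1, 1, 0, 1, -1, 0, 1, 1, -2, qc, -θ]

/-- The 13 roots of `D` labelled by the points of `P²(𝔽₃)`. -/
def pt : Fin 13 → V :=
  ![rA, rC1, rC2, rC3, rE1, rE2, rE3, rA1, rA2, rA3, rG1, rG2, rG3]

/-- The 13 roots of `D` labelled by the lines of `P²(𝔽₃)`. -/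
def lnr : Fin 13 → V :=
  ![rF, rB1, rB2, rB3, rD1, rD2, rD3, rF1, rF2, rF3, rZ1, rZ2, rZ3]

/-- The 26 roots of the diagram `D` (the incidence graph of `P²(𝔽₃)`). -/
def D26 : Set V := Set.range pt ∪ Set.range lnr

/-- The 16 roots forming the `M₆₆₆` diagram. -/
def M16 : Set V :=
  Set.range
    (![rA, rB1, rB2, rB3, rC1, rC2, rC3, rD1, rD2, rD3, rE1, rE2, rE3, rF1, rF2, rF3] :
      Fin 16 → V)

/-- The 26 vectors `(ρ₁,…,ρ₂₆) = (x₁,…,x₁₃, ξl₁,…,ξl₁₃)`. -/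
def ρv : Fin 26 → V := fun i =>
  if h : (i : ℕ) < 13 then pt ⟨(i : ℕ), h⟩
  else ξ • lnr ⟨(i : ℕ) - 13, by have := i.isLt; omega⟩

/-- The Weyl vector `ρ̄ = (Σ points + ξ Σ lines)/26`. -/
def ρbar : V := (26 : ℂ)⁻¹ • ((∑ i : Fin 13, pt i) + ξ • ∑ i : Fin 13, lnr i)

/-- The height of a root: `ht(r) = |⟨ρ̄, r⟩| / |ρ̄|²`. -/
def ht (r : V) : ℝ := ‖herm ρbar r‖ / ‖herm ρbar ρbar‖

/-- The 26 roots of `D`, enumerated with the 13 point roots first and the 13 line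
roots afterwards. -/
def droot : Fin 26 → V := fun i =>
  if h : (i : ℕ) < 13 then pt ⟨(i : ℕ), h⟩
  else lnr ⟨(i : ℕ) - 13, by have := i.isLt; omega⟩

/-- An index corresponds to a point of `P²(𝔽₃)` iff it is below 13. -/
def IsPointIdx (i : Fin 26) : Prop := (i : ℕ) < 13

/-- The group of diagram automorphisms of `D`: permutations of the 26 roots
preserving points, lines and adjacency.  Since the incidence graph of `P²(𝔽₃)`
has automorphism group `PGL₃(𝔽₃)·2`, this group is isomorphic to `PGL₃(𝔽₃)`. -/
def DiagAut : Subgroup (Equiv.Perm (Fin 26)) where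
  carrier := {π | (∀ i, IsPointIdx (π i) ↔ IsPointIdx i) ∧
    ∀ i j, Adj (droot (π i)) (droot (π j)) ↔ Adj (droot i) (droot j)}
  one_mem' := ⟨fun _ => Iff.rfl, fun _ _ => Iff.rfl⟩
  mul_mem' := by
    rintro f g ⟨hf1, hf2⟩ ⟨hg1, hg2⟩
    refine ⟨fun i => ?_, fun i j => ?_⟩
    · rw [Equiv.Perm.mul_apply]
      exact (hf1 (g i)).trans (hg1 i)
    · rw [Equiv.Perm.mul_apply, Equiv.Perm.mul_apply]
      exact (hf2 (g i) (g j)).trans (hg2 i j)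
  inv_mem' := by
    rintro g ⟨hg1, hg2⟩
    refine ⟨fun i => ?_, fun i j => ?_⟩
    · have h := hg1 (g⁻¹ i)
      have hi : g (g⁻¹ i) = i := g.apply_symm_apply i
      rw [hi] at h
      exact h.symm
    · have h := hg2 (g⁻¹ i) (g⁻¹ j)
      have hi : g (g⁻¹ i) = i := g.apply_symm_apply i
      have hj : g (g⁻¹ j) = j := g.apply_symm_apply j
      rw [hi, hj] at h
      exact h.symm

/-!
The Gram matrix of the 26 roots depends only on equality, on the type (point or line) of the first
index and on adjacency, so it is invariant under diagram automorphisms. The roots span `ℂ¹⁴` and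
the form is nondegenerate, so the linear relations between the roots are exactly the radical of the
Gram matrix; hence every permutation preserving the Gram matrix extends, uniquely, to an isometry,
and uniqueness makes the extension multiplicative. The isometries preserve `L` because `L` is the
`ℰ`-span of the roots: modulo `θ` the roots `Dₖ` and `Fₖ` span the tetracode of the `k`-th block,
and both `θ`-multiples of the block coordinate vectors and a basis of the hyperbolic cell are
combinations of roots.
-/

/-! ### Extending symmetries of a Gram matrix -/

section GramExtension

open Submodule

variable {R M N ι : Type*} [CommRing R] [AddCommGroup M] [Module R M] [AddCommGroup N] [Module R N]
  {I : R →+* R} {v : ι → M} {w : ι → N}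

lemma exists_linearMap_of_ker_linearCombination_le (hv : span R (Set.range v) = ⊤)
    (hker : (Finsupp.linearCombination R v).ker ≤ (Finsupp.linearCombination R w).ker) :
    ∃ f : M →ₗ[R] N, ∀ i, f (v i) = w i := by
  have hsurj : Function.Surjective (Finsupp.linearCombination R v) := by
    rw [← LinearMap.range_eq_top, Finsupp.range_linearCombination, hv]
  let e := (Finsupp.linearCombination R v).quotKerEquivOfSurjective hsurj
  refine ⟨liftQ _ (Finsupp.linearCombination R w) hker ∘ₗ e.symm, fun i => ?_⟩
  have he : e.symm (v i) = Submodule.Quotient.mk (Finsupp.single i 1) := by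
    rw [LinearEquiv.symm_apply_eq]
    simp [e]
  simp [he]

variable {B : M →ₛₗ[I] M →ₗ[R] R} {C : N →ₛₗ[I] N →ₗ[R] R}

/-- A relation `∑ cᵢ vᵢ = 0` pairs to zero with every `vⱼ`, so `∑ cᵢ wᵢ` pairs to zero with every
`wⱼ`. -/
lemma ker_linearCombination_le_of_gram_eq (hw : span R (Set.range w) = ⊤)
    (hC : C.SeparatingRight) (hgram : ∀ i j, C (w i) (w j) = B (v i) (v j)) :
    (Finsupp.linearCombination R v).ker ≤ (Finsupp.linearCombination R w).ker := by
  intro c hc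
  rw [LinearMap.mem_ker] at hc ⊢
  have hpair (i : ι) : C (w i) (Finsupp.linearCombination R w c) =
      B (v i) (Finsupp.linearCombination R v c) := by
    simp only [Finsupp.linearCombination_apply, map_finsuppSum, map_smul, hgram]
  have hzero : C.flip (Finsupp.linearCombination R w c) = 0 :=
    LinearMap.ext_on_range hw fun i => by simp [hpair, hc]
  exact hC _ fun x => LinearMap.congr_fun hzero x

lemma exists_linearMap_of_gram_eq (hv : span R (Set.range v) = ⊤)
    (hw : span R (Set.range w) = ⊤) (hC : C.SeparatingRight)
    (hgram : ∀ i j, C (w i) (w j) = B (v i) (v j)) : ∃ f : M →ₗ[R] N, ∀ i, f (v i) = w i :=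
  exists_linearMap_of_ker_linearCombination_le hv (ker_linearCombination_le_of_gram_eq hw hC hgram)

lemma map_form_of_gram_eq (hv : span R (Set.range v) = ⊤) {f : M →ₗ[R] N}
    (hf : ∀ i, f (v i) = w i) (hgram : ∀ i j, C (w i) (w j) = B (v i) (v j)) (x y : M) :
    C (f x) (f y) = B x y := by
  suffices h : (C.comp f).compl₂ f = B from LinearMap.congr_fun₂ h x y
  refine LinearMap.ext_on_range hv fun i => LinearMap.ext_on_range hv fun j => ?_
  simp [hf, hgram]

theorem exists_monoidHom_linearEquiv_of_gram_invariant {G : Type*} [Group G] [MulAction G ι]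
    (hv : span R (Set.range v) = ⊤) (hB : B.SeparatingRight)
    (hgram : ∀ (g : G) i j, B (v (g • i)) (v (g • j)) = B (v i) (v j)) :
    ∃ F : G →* (M ≃ₗ[R] M), ∀ g i, F g (v i) = v (g • i) := by
  have hspan (g : G) : span R (Set.range fun i => v (g • i)) = ⊤ := by
    rw [← hv]
    exact congrArg _ ((MulAction.surjective g).range_comp v)
  choose f hf using fun g : G => exists_linearMap_of_gram_eq hv (hspan g) hB (hgram g)
  let ρ : G →* Module.End R M :=
    { toFun := f
      map_one' := LinearMap.ext_on_range hv fun i => by simp [hf]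
      map_mul' g h := LinearMap.ext_on_range hv fun i => by simp [hf, mul_smul] }
  exact ⟨(LinearMap.GeneralLinearGroup.generalLinearEquiv R M).toMonoidHom.comp ρ.toHomUnits, hf⟩

lemma apply_mem_span_range_iff {A : Type*} [Semiring A] [Module A M]
    [LinearMap.CompatibleSMul M M A R] {f : M ≃ₗ[R] M} {π : Equiv.Perm ι}
    (hf : ∀ i, f (v i) = v (π i)) (x : M) :
    f x ∈ span A (Set.range v) ↔ x ∈ span A (Set.range v) := by
  have hmap : (span A (Set.range v)).map (f.restrictScalars A : M →ₗ[A] M) =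
      span A (Set.range v) := by
    rw [map_span, ← Set.range_comp, ← π.surjective.range_comp v]
    exact congrArg _ (congrArg _ (funext hf))
  conv_lhs => rw [← hmap]
  exact f.injective.mem_set_image

end GramExtension

/-! ### Eisenstein integers -/

lemma isPrimitiveRoot_ω : IsPrimitiveRoot ω 3 := by
  simpa [ω] using Complex.isPrimitiveRoot_exp 3 (by norm_num)

lemma ω_sq : ω ^ 2 = -1 - ω := by
  have h := isPrimitiveRoot_ω.geom_sum_eq_zero (by norm_num)
  rw [Finset.sum_range_succ, Finset.sum_range_succ, Finset.sum_range_one] at h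
  linear_combination h

lemma norm_ω : ‖ω‖ = 1 := isPrimitiveRoot_ω.norm'_eq_one (by norm_num)

lemma conj_ω : conj ω = -1 - ω := by
  rw [← Complex.inv_eq_conj norm_ω, ← ω_sq]
  exact inv_eq_of_mul_eq_one_right (by rw [← pow_succ', isPrimitiveRoot_ω.pow_eq_one])

lemma θ_eq : θ = 1 + 2 * ω := by
  rw [θ, conj_ω]
  ring

lemma qc_eq : qc = ω - 1 := by
  rw [qc, θ_eq]
  linear_combination (1 - 2 * ω) * ω_sq

lemma norm_θ : ‖θ‖ = √3 := by
  have hsq : θ * θ = -3 := by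
    rw [θ_eq]
    linear_combination 4 * ω_sq
  rw [← Real.sqrt_mul_self (norm_nonneg θ), ← norm_mul, hsq]
  norm_num

lemma θ_ne_zero : θ ≠ 0 := norm_ne_zero_iff.1 (by rw [norm_θ]; positivity)

/-- The ring `ℰ = ℤ[ω]` of Eisenstein integers `a + bω`, presented by `ω² = -1 - ω`. Unlike the
predicate `EisP` on complex numbers it has decidable equality, so that identities between
explicit vectors can be evaluated. -/
abbrev EisensteinInt : Type := QuadraticAlgebra ℤ (-1) (-1)

namespace EisensteinInt

/-- The inclusion `ℰ ⊆ ℂ`. -/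
def toComplex : EisensteinInt →+* ℂ :=
  (QuadraticAlgebra.lift ⟨ω, by rw [← sq, ω_sq]; module⟩ : EisensteinInt →ₐ[ℤ] ℂ)

instance : Algebra EisensteinInt ℂ := toComplex.toAlgebra

lemma algebraMap_eq (z : EisensteinInt) : algebraMap EisensteinInt ℂ z = z.re + z.im * ω := by
  simp [RingHom.algebraMap_toAlgebra, toComplex, QuadraticAlgebra.lift]

lemma algebraMap_injective : Function.Injective (algebraMap EisensteinInt ℂ) := by
  refine (injective_iff_map_eq_zero _).2 fun z hz => ?_
  have hnorm : z.norm = 0 := by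
    have h : algebraMap EisensteinInt ℂ (algebraMap ℤ EisensteinInt z.norm) = 0 := by
      rw [QuadraticAlgebra.algebraMap_norm_eq_mul_star, map_mul, hz, zero_mul]
    simpa using h
  rw [QuadraticAlgebra.norm_def] at hnorm
  have him : z.im = 0 := by nlinarith [sq_nonneg (2 * z.re - z.im)]
  have hre : z.re = 0 := by nlinarith [sq_nonneg (2 * z.im - z.re)]
  exact QuadraticAlgebra.ext hre him

lemma eisP_iff (z : ℂ) : EisP z ↔ ∃ x : EisensteinInt, algebraMap EisensteinInt ℂ x = z := by
  refine ⟨?_, ?_⟩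
  · rintro ⟨a, b, rfl⟩
    exact ⟨⟨a, b⟩, algebraMap_eq _⟩
  · rintro ⟨x, rfl⟩
    exact ⟨x.re, x.im, algebraMap_eq _⟩

lemma algebraMap_star (z : EisensteinInt) :
    algebraMap EisensteinInt ℂ (star z) = conj (algebraMap EisensteinInt ℂ z) := by
  simp only [algebraMap_eq, QuadraticAlgebra.re_star, QuadraticAlgebra.im_star, map_add,
    map_mul, conj_ω, map_intCast]
  push_cast
  ring

/-- The cube root of unity `ω` as an element of `ℰ`. -/
def omega : EisensteinInt := ⟨0, 1⟩

/-- The prime `θ = √-3` as an element of `ℰ`. -/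
def theta : EisensteinInt := ⟨1, 2⟩

@[simp]
lemma algebraMap_omega : algebraMap EisensteinInt ℂ omega = ω := by
  simp [algebraMap_eq, omega]

@[simp]
lemma algebraMap_theta : algebraMap EisensteinInt ℂ theta = θ := by
  simp [algebraMap_eq, theta, θ_eq]

/-- Reduction modulo `θ`, with residue field `ℰ/θℰ = 𝔽₃`; it sends `ω` to `1`. -/
def modTheta : EisensteinInt →+* ZMod 3 :=
  (QuadraticAlgebra.lift ⟨1, by decide⟩ : EisensteinInt →ₐ[ℤ] ZMod 3)

lemma modTheta_apply (z : EisensteinInt) : modTheta z = ((z.re + z.im : ℤ) : ZMod 3) := by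
  simp [modTheta, QuadraticAlgebra.lift]

lemma modTheta_eq_zero_iff (z : EisensteinInt) : modTheta z = 0 ↔ theta ∣ z := by
  constructor
  · intro hz
    rw [modTheta_apply, ZMod.intCast_zmod_eq_zero_iff_dvd] at hz
    obtain ⟨m, hm⟩ := hz
    push_cast at hm
    refine ⟨⟨z.im - m, z.im - 2 * m⟩, ?_⟩
    ext
    · simp only [theta, QuadraticAlgebra.re_mul]
      linarith
    · simp only [theta, QuadraticAlgebra.im_mul]
      linarith
  · rintro ⟨c, rfl⟩
    have htheta : modTheta theta = 0 := by decide
    rw [map_mul, htheta, zero_mul]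

end EisensteinInt

open EisensteinInt

/-! ### The lattice in integral coordinates -/

/-- The coordinate lattice `ℰ¹⁴` included in `ℂ¹⁴`. -/
def coordEmb : (Fin 14 → EisensteinInt) →ₗ[EisensteinInt] V :=
  (Algebra.linearMap EisensteinInt ℂ).compLeft (Fin 14)

@[simp]
lemma coordEmb_apply (x : Fin 14 → EisensteinInt) (j : Fin 14) :
    coordEmb x j = algebraMap EisensteinInt ℂ (x j) := rfl

/-- The complex `E₈` lattice in integral coordinates: the tetracode spanned by `(1, 1, -1, 0)` and
`(0, 1, 1, 1)` consists of the words `c` with `c₁ = c₀ + c₃` and `c₂ = c₃ - c₀`. -/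
def latticeE8 : Submodule EisensteinInt (Fin 4 → EisensteinInt) where
  carrier := {x | modTheta (x 1) = modTheta (x 0) + modTheta (x 3) ∧
    modTheta (x 2) = modTheta (x 3) - modTheta (x 0)}
  zero_mem' := by simp
  add_mem' := by
    rintro x y ⟨hx₁, hx₂⟩ ⟨hy₁, hy₂⟩
    constructor
    · simp only [Pi.add_apply, map_add, hx₁, hy₁]; ring
    · simp only [Pi.add_apply, map_add, hx₂, hy₂]; ring
  smul_mem' := by
    rintro c x ⟨hx₁, hx₂⟩
    constructor
    · simp only [Pi.smul_apply, smul_eq_mul, map_mul, hx₁]; ring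
    · simp only [Pi.smul_apply, smul_eq_mul, map_mul, hx₂]; ring

instance (x : Fin 4 → EisensteinInt) : Decidable (x ∈ latticeE8) :=
  inferInstanceAs (Decidable (_ ∧ _))

lemma mem_latticeE8_iff_exists (x : Fin 4 → EisensteinInt) : x ∈ latticeE8 ↔
    ∃ s t : ℤ, ∀ i, modTheta (x i) = ((tet1 i * s + tet2 i * t : ℤ) : ZMod 3) := by
  constructor
  · rintro ⟨h₁, h₂⟩
    obtain ⟨s, hs⟩ := ZMod.intCast_surjective (modTheta (x 0))
    obtain ⟨t, ht⟩ := ZMod.intCast_surjective (modTheta (x 3))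
    refine ⟨s, t, fun i => ?_⟩
    fin_cases i <;> simp [tet1, tet2, h₁, h₂, hs, ht, neg_add_eq_sub]
  · rintro ⟨s, t, h⟩
    constructor
    · simp [h, tet1, tet2]
    · simp [h, tet1, tet2, neg_add_eq_sub]

lemma exists_sub_intCast_eq_theta_mul_iff (z : EisensteinInt) (n : ℤ) :
    (∃ a b : ℤ, algebraMap EisensteinInt ℂ z - (n : ℂ) = θ * ((a : ℂ) + (b : ℂ) * ω)) ↔
      modTheta z = n := by
  rw [← sub_eq_zero, ← map_intCast modTheta, ← map_sub, modTheta_eq_zero_iff]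
  constructor
  · rintro ⟨a, b, h⟩
    refine ⟨⟨a, b⟩, EisensteinInt.algebraMap_injective ?_⟩
    simpa [algebraMap_eq ⟨a, b⟩] using h
  · rintro ⟨c, hc⟩
    refine ⟨c.re, c.im, ?_⟩
    simpa [algebraMap_eq c] using congrArg (algebraMap EisensteinInt ℂ) hc

lemma inE8_algebraMap_iff (x : Fin 4 → EisensteinInt) :
    inE8 (fun i => algebraMap EisensteinInt ℂ (x i)) ↔ x ∈ latticeE8 := by
  simp only [inE8, exists_sub_intCast_eq_theta_mul_iff, mem_latticeE8_iff_exists,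
    and_iff_right_iff_imp]
  exact fun _ i => (eisP_iff _).2 ⟨x i, rfl⟩

/-- The position in `3E₈ ⊕ H` of the `i`-th coordinate of the `k`-th copy of `E₈`. -/
def blockIdx (k : Fin 3) (i : Fin 4) : Fin 14 := ⟨4 * k + i, by omega⟩

/-- The lattice `L = 3E₈ ⊕ H` in integral coordinates. -/
def latticeL : Submodule EisensteinInt (Fin 14 → EisensteinInt) :=
  ⨅ k : Fin 3, latticeE8.comap (LinearMap.funLeft EisensteinInt EisensteinInt (blockIdx k))

lemma mem_latticeL {x : Fin 14 → EisensteinInt} :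
    x ∈ latticeL ↔ ∀ k, (fun i => x (blockIdx k i)) ∈ latticeE8 := by
  simp only [latticeL, Submodule.mem_iInf]
  rfl

lemma eisP_apply_of_mem_Lset {v : V} (hv : v ∈ Lset) (j : Fin 14) : EisP (v j) := by
  obtain ⟨hE8, h12, h13⟩ := hv
  have hblock (k : Fin 3) (i : Fin 4) : EisP (v (blockIdx k i)) := (hE8 k).1 i
  fin_cases j
  exacts [hblock 0 0, hblock 0 1, hblock 0 2, hblock 0 3, hblock 1 0, hblock 1 1, hblock 1 2,
    hblock 1 3, hblock 2 0, hblock 2 1, hblock 2 2, hblock 2 3, h12, h13]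

lemma coordEmb_mem_Lset_iff (x : Fin 14 → EisensteinInt) : coordEmb x ∈ Lset ↔ x ∈ latticeL := by
  have hE8 (k : Fin 3) : (inE8 fun i => coordEmb x (blockIdx k i)) ↔
      (fun i => x (blockIdx k i)) ∈ latticeE8 := inE8_algebraMap_iff _
  have heis (j : Fin 14) : EisP (coordEmb x j) := (eisP_iff _).2 ⟨x j, rfl⟩
  rw [mem_latticeL]
  exact ⟨fun h k => (hE8 k).1 (h.1 k), fun h => ⟨fun k => (hE8 k).2 (h k), heis 12, heis 13⟩⟩

lemma Lset_eq_map_latticeL : Lset = latticeL.map coordEmb := by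
  ext v
  constructor
  · intro hv
    choose x hx using fun j => (eisP_iff _).1 (eisP_apply_of_mem_Lset hv j)
    obtain rfl : coordEmb x = v := funext hx
    exact ⟨x, (coordEmb_mem_Lset_iff x).1 hv, rfl⟩
  · rintro ⟨x, hx, rfl⟩
    exact (coordEmb_mem_Lset_iff x).2 hx

/-! ### The roots -/

/-- The 26 roots `droot` in integral coordinates. -/
def intRoot : Fin 26 → Fin 14 → EisensteinInt :=
  let w := omega
  let t := theta
  let q : EisensteinInt := w - 1
  ![![0, 0, 0, 0, 0, 0, 0, 0, 0, 0, 0, 0, 1, w ^ 2],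
    ![q, 0, 0, 0, 0, 0, 0, 0, 0, 0, 0, 0, 0, 0],
    ![0, 0, 0, 0, q, 0, 0, 0, 0, 0, 0, 0, 0, 0],
    ![0, 0, 0, 0, 0, 0, 0, 0, q, 0, 0, 0, 0, 0],
    ![0, q, 0, 0, 0, 0, 0, 0, 0, 0, 0, 0, 0, 0],
    ![0, 0, 0, 0, 0, q, 0, 0, 0, 0, 0, 0, 0, 0],
    ![0, 0, 0, 0, 0, 0, 0, 0, 0, q, 0, 0, 0, 0],
    ![0, 0, 0, 0, 0, 0, 0, q, 0, 0, 0, q, w, w ^ 2],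
    ![0, 0, 0, q, 0, 0, 0, 0, 0, 0, 0, q, w, w ^ 2],
    ![0, 0, 0, q, 0, 0, 0, q, 0, 0, 0, 0, w, w ^ 2],
    ![0, 0, 0, q, 0, 0, -q, q, 0, 0, -q, q, 2 * w, 2 * w ^ 2],
    ![0, 0, -q, q, 0, 0, 0, q, 0, 0, -q, q, 2 * w, 2 * w ^ 2],
    ![0, 0, -q, q, 0, 0, -q, q, 0, 0, 0, q, 2 * w, 2 * w ^ 2],
    ![0, 1, 1, -2, 0, 1, 1, -2, 0, 1, 1, -2, -2 + w, -t],
    ![1, 0, 1, -1, 0, 0, 0, 0, 0, 0, 0, 0, -1, 0],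
    ![0, 0, 0, 0, 1, 0, 1, -1, 0, 0, 0, 0, -1, 0],
    ![0, 0, 0, 0, 0, 0, 0, 0, 1, 0, 1, -1, -1, 0],
    ![1, 1, -1, 0, 0, 0, 0, 0, 0, 0, 0, 0, 0, 0],
    ![0, 0, 0, 0, 1, 1, -1, 0, 0, 0, 0, 0, 0, 0],
    ![0, 0, 0, 0, 0, 0, 0, 0, 1, 1, -1, 0, 0, 0],
    ![0, 1, 1, 1, 0, 0, 0, 0, 0, 0, 0, 0, 0, 0],
    ![0, 0, 0, 0, 0, 1, 1, 1, 0, 0, 0, 0, 0, 0],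
    ![0, 0, 0, 0, 0, 0, 0, 0, 0, 1, 1, 1, 0, 0],
    ![0, 1, 1, -2, 1, 0, 1, -1, 1, 0, 1, -1, q, -t],
    ![1, 0, 1, -1, 0, 1, 1, -2, 1, 0, 1, -1, q, -t],
    ![1, 0, 1, -1, 1, 0, 1, -1, 0, 1, 1, -2, q, -t]]

lemma comp_vecCons {α β : Type*} {n : ℕ} (f : α → β) (a : α) (x : Fin n → α) :
    f ∘ Matrix.vecCons a x = Matrix.vecCons (f a) (f ∘ x) := Fin.comp_cons f a x

lemma coordEmb_intRoot (i : Fin 26) : coordEmb (intRoot i) = droot i := by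
  have htwo : algebraMap EisensteinInt ℂ 2 = 2 := map_ofNat _ 2
  change algebraMap EisensteinInt ℂ ∘ intRoot i = droot i
  fin_cases i <;>
  simp [intRoot, droot, pt, lnr, qc_eq, rA, rC1, rC2, rC3, rE1, rE2, rE3, rA1, rA2, rA3, rG1, rG2,
    rG3, rF, rB1, rB2, rB3, rD1, rD2, rD3, rF1, rF2, rF3, rZ1, rZ2, rZ3, comp_vecCons,
    Matrix.empty_eq, htwo]

/-- The Hermitian form `herm` in integral coordinates. -/
def intHerm (x y : Fin 14 → EisensteinInt) : EisensteinInt :=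
  -(∑ i : Fin 12, star (x (Fin.castLE (by norm_num) i)) * y (Fin.castLE (by norm_num) i)) +
    star (x 12) * star theta * y 13 + star (x 13) * theta * y 12

lemma herm_coordEmb (x y : Fin 14 → EisensteinInt) :
    herm (coordEmb x) (coordEmb y) = algebraMap EisensteinInt ℂ (intHerm x y) := by
  simp only [herm, intHerm, coordEmb_apply, map_add, map_neg, map_sum, map_mul, algebraMap_star,
    algebraMap_theta]

lemma intHerm_intRoot : ∀ i j : Fin 26,
    i = j ∧ intHerm (intRoot i) (intRoot j) = -3 ∨
    i ≠ j ∧ (intHerm (intRoot i) (intRoot j) = 0 ∨ intHerm (intRoot i) (intRoot j) =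
      if (i : ℕ) < 13 then -theta * omega else theta * omega ^ 2) := by
  decide +kernel

open Classical in
lemma herm_droot (i j : Fin 26) : herm (droot i) (droot j) =
    if i = j then -3
    else if Adj (droot i) (droot j) then (if IsPointIdx i then -θ * ω else θ * ω ^ 2)
    else 0 := by
  have hval := herm_coordEmb (intRoot i) (intRoot j)
  rw [coordEmb_intRoot, coordEmb_intRoot] at hval
  rcases intHerm_intRoot i j with ⟨hij, h⟩ | ⟨hij, h | h⟩
  · rw [if_pos hij, hval, h, map_neg, map_ofNat]
  · have hzero : herm (droot i) (droot j) = 0 := by rw [hval, h, map_zero]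
    have hadj : ¬ Adj (droot i) (droot j) := by
      rw [Adj, hzero, norm_zero]
      positivity
    rw [if_neg hij, if_neg hadj, hzero]
  · have hedge : herm (droot i) (droot j) = if IsPointIdx i then -θ * ω else θ * ω ^ 2 := by
      rw [hval, h, apply_ite (algebraMap EisensteinInt ℂ)]
      simp [IsPointIdx]
    have hadj : Adj (droot i) (droot j) := by
      rw [Adj, hedge]
      split_ifs <;> simp [norm_θ, norm_ω]
    rw [if_neg hij, if_pos hadj, hedge]

lemma herm_droot_diagAut (π : DiagAut) (i j : Fin 26) :
    herm (droot (π • i)) (droot (π • j)) = herm (droot i) (droot j) := by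
  have hpoint : IsPointIdx (π • i) ↔ IsPointIdx i := π.2.1 i
  have hadj : Adj (droot (π • i)) (droot (π • j)) ↔ Adj (droot i) (droot j) := π.2.2 i j
  classical
  simp only [herm_droot, hpoint, hadj, smul_left_cancel_iff]

/-! ### Generation of the lattice by the roots -/

/-- The indices of the roots `C₁, C₂, C₃`. -/
def idxC : Fin 3 → Fin 26 := ![1, 2, 3]

/-- The indices of the roots `E₁, E₂, E₃`. -/
def idxE : Fin 3 → Fin 26 := ![4, 5, 6]

/-- The indices of the roots `D₁, D₂, D₃`. -/
def idxD : Fin 3 → Fin 26 := ![17, 18, 19]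

/-- The indices of the roots `F₁, F₂, F₃`. -/
def idxF : Fin 3 → Fin 26 := ![20, 21, 22]

/-- The `ℰ`-span of the 26 roots in integral coordinates. -/
def rootSpan : Submodule EisensteinInt (Fin 14 → EisensteinInt) :=
  Submodule.span EisensteinInt (Set.range intRoot)

lemma intRoot_mem_rootSpan (i : Fin 26) : intRoot i ∈ rootSpan :=
  Submodule.subset_span ⟨i, rfl⟩

lemma intRoot_mem_latticeL (i : Fin 26) : intRoot i ∈ latticeL := by
  rw [mem_latticeL]
  revert i
  decide +kernel

lemma theta_smul_single_blockIdx_one : ∀ k : Fin 3,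
    theta • Pi.single (blockIdx k 1) 1 = -omega • intRoot (idxE k) := by
  decide +kernel

lemma theta_smul_single_blockIdx_two : ∀ k : Fin 3,
    theta • Pi.single (blockIdx k 2) 1 =
      -omega • (intRoot (idxC k) + intRoot (idxE k)) - theta • intRoot (idxD k) := by
  decide +kernel

lemma single_twelve_eq : (Pi.single 12 1 : Fin 14 → EisensteinInt) =
    intRoot (idxD 0) - intRoot (idxF 0) - intRoot 14 -
      theta • theta • Pi.single (blockIdx 0 2) 1 := by
  decide +kernel

lemma single_thirteen_eq : (Pi.single 13 1 : Fin 14 → EisensteinInt) =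
    omega • (intRoot 0 - Pi.single 12 1) := by
  decide +kernel

lemma theta_smul_single_blockIdx_one_mem (k : Fin 3) :
    theta • Pi.single (blockIdx k 1) 1 ∈ rootSpan := by
  rw [theta_smul_single_blockIdx_one]
  exact rootSpan.smul_mem _ (intRoot_mem_rootSpan _)

lemma theta_smul_single_blockIdx_two_mem (k : Fin 3) :
    theta • Pi.single (blockIdx k 2) 1 ∈ rootSpan := by
  rw [theta_smul_single_blockIdx_two]
  exact sub_mem (rootSpan.smul_mem _ (add_mem (intRoot_mem_rootSpan _) (intRoot_mem_rootSpan _)))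
    (rootSpan.smul_mem _ (intRoot_mem_rootSpan _))

lemma single_twelve_mem : Pi.single 12 1 ∈ rootSpan := by
  rw [single_twelve_eq]
  exact sub_mem (sub_mem (sub_mem (intRoot_mem_rootSpan _) (intRoot_mem_rootSpan _))
    (intRoot_mem_rootSpan _)) (rootSpan.smul_mem _ (theta_smul_single_blockIdx_two_mem 0))

lemma single_thirteen_mem : Pi.single 13 1 ∈ rootSpan := by
  rw [single_thirteen_eq]
  exact rootSpan.smul_mem _ (sub_mem (intRoot_mem_rootSpan _) single_twelve_mem)

/-- Subtracting the tetracode word with the same entries in positions `0` and `3` clears these two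
positions of each block; for `x ∈ L` the remaining two entries are divisible by `θ`. -/
lemma eq_sum_blocks_add (x : Fin 14 → EisensteinInt) :
    x = (∑ k : Fin 3, (x (blockIdx k 0) • intRoot (idxD k) + x (blockIdx k 3) • intRoot (idxF k) +
      (x (blockIdx k 1) - (x (blockIdx k 0) + x (blockIdx k 3))) • Pi.single (blockIdx k 1) 1 +
      (x (blockIdx k 2) - (x (blockIdx k 3) - x (blockIdx k 0))) • Pi.single (blockIdx k 2) 1)) +
      x 12 • Pi.single 12 1 + x 13 • Pi.single 13 1 := by
  ext1 j
  simp only [Fin.sum_univ_three, Pi.add_apply, Pi.smul_apply, Pi.single_apply, smul_eq_mul]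
  fin_cases j <;> simp [intRoot, idxD, idxF, blockIdx] <;> ring

lemma sub_smul_mem_of_modTheta_eq {M : Type*} [AddCommGroup M] [Module EisensteinInt M]
    {N : Submodule EisensteinInt M} {y : M} (hy : theta • y ∈ N) {a b : EisensteinInt}
    (hab : modTheta a = modTheta b) : (a - b) • y ∈ N := by
  obtain ⟨c, hc⟩ := (modTheta_eq_zero_iff (a - b)).1 (by rw [map_sub, hab, sub_self])
  rw [hc, mul_comm, mul_smul]
  exact N.smul_mem c hy

theorem rootSpan_eq_latticeL : rootSpan = latticeL := by
  refine le_antisymm (Submodule.span_le.2 (Set.range_subset_iff.2 intRoot_mem_latticeL)) ?_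
  intro x hx
  rw [eq_sum_blocks_add x]
  refine add_mem (add_mem (sum_mem fun k _ => ?_) (rootSpan.smul_mem _ single_twelve_mem))
    (rootSpan.smul_mem _ single_thirteen_mem)
  obtain ⟨h₁, h₂⟩ := mem_latticeL.1 hx k
  rw [← map_add] at h₁
  rw [← map_sub] at h₂
  exact add_mem (add_mem (add_mem (rootSpan.smul_mem _ (intRoot_mem_rootSpan _))
    (rootSpan.smul_mem _ (intRoot_mem_rootSpan _)))
    (sub_smul_mem_of_modTheta_eq (theta_smul_single_blockIdx_one_mem k) h₁))
    (sub_smul_mem_of_modTheta_eq (theta_smul_single_blockIdx_two_mem k) h₂)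

theorem Lset_eq_span_droot : Lset = Submodule.span EisensteinInt (Set.range droot) := by
  have hcomp : coordEmb ∘ intRoot = droot := funext coordEmb_intRoot
  rw [Lset_eq_map_latticeL, ← rootSpan_eq_latticeL, rootSpan, Submodule.map_span, ← Set.range_comp,
    hcomp]

lemma single_theta_mem_latticeL : ∀ j : Fin 14, Pi.single j theta ∈ latticeL := by
  simp only [mem_latticeL]
  decide +kernel

lemma span_droot_eq_top : Submodule.span ℂ (Set.range droot) = ⊤ := by
  rw [eq_top_iff, ← (Pi.basisFun ℂ (Fin 14)).span_eq, Submodule.span_le, Set.range_subset_iff]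
  intro j
  have hmem : coordEmb (Pi.single j theta) ∈ Submodule.span ℂ (Set.range droot) := by
    apply Submodule.span_subset_span EisensteinInt ℂ
    rw [← Lset_eq_span_droot]
    exact (coordEmb_mem_Lset_iff _).2 (single_theta_mem_latticeL j)
  have hsmul : coordEmb (Pi.single j theta) = θ • Pi.basisFun ℂ (Fin 14) j := by
    ext i
    simp [Pi.single_apply, apply_ite (algebraMap EisensteinInt ℂ)]
  rw [hsmul] at hmem
  exact ((Submodule.span ℂ (Set.range droot)).smul_mem_iff θ_ne_zero).1 hmem

/-! ### Extending diagram automorphisms -/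

/-- The Hermitian form `herm` as a sesquilinear map. -/
def hermForm : V →ₗ⋆[ℂ] V →ₗ[ℂ] ℂ :=
  LinearMap.mk₂'ₛₗ (starRingEnd ℂ) (RingHom.id ℂ) herm
    (fun u u' v => by
      simp only [herm, Pi.add_apply, map_add, add_mul, Finset.sum_add_distrib]
      ring)
    (fun c u v => by
      simp only [herm, Pi.smul_apply, smul_eq_mul, map_mul, mul_assoc, ← Finset.mul_sum]
      ring)
    (fun u v v' => by
      simp only [herm, Pi.add_apply, mul_add, Finset.sum_add_distrib]
      ring)
    (fun c u v => by
      simp only [herm, Pi.smul_apply, smul_eq_mul, RingHom.id_apply, mul_left_comm _ c,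
        ← Finset.mul_sum]
      ring)

@[simp]
lemma hermForm_apply (u v : V) : hermForm u v = herm u v := rfl

lemma hermForm_separatingRight : hermForm.SeparatingRight := by
  intro v hv
  have h12 : v 12 = 0 := by
    simpa [herm, Pi.single_apply, Fin.sum_univ_succ, Fin.ext_iff, θ_ne_zero] using
      hv (Pi.single 13 1)
  have h13 : v 13 = 0 := by
    simpa [herm, Pi.single_apply, Fin.sum_univ_succ, Fin.ext_iff, θ_ne_zero] using
      hv (Pi.single 12 1)
  have hE8 (i : Fin 12) : v (Fin.castLE (by norm_num) i) = 0 := by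
    simpa [herm, h12, h13, Pi.single_apply, apply_ite conj] using
      hv (Pi.single (Fin.castLE (by norm_num) i) 1)
  ext j
  obtain hj | rfl | rfl : (j : ℕ) < 12 ∨ j = 12 ∨ j = 13 := by omega
  exacts [hE8 ⟨j, hj⟩, h12, h13]

lemma mem_AutL_of_permutes_droot {f : V ≃ₗ[ℂ] V} {π : DiagAut}
    (hf : ∀ i, f (droot i) = droot (π • i)) : f ∈ AutL := by
  constructor
  · intro v
    rw [Lset_eq_span_droot]
    exact (apply_mem_span_range_iff (π := π.1) hf v).symm
  · exact map_form_of_gram_eq (B := hermForm) (C := hermForm) (f := f.toLinearMap)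
      span_droot_eq_top hf (herm_droot_diagAut π)

/-- The action of the group `G ≅ PGL₃(𝔽₃)` of diagram automorphisms of `D` on the
26 roots extends to a linear action of `G` on the lattice `L`: there is a group
homomorphism `G → Aut(L)` sending each diagram automorphism to an automorphism of
`L` permuting the 26 roots in the prescribed way. -/
theorem stmt11 : ∃ F : DiagAut →* AutL,
    ∀ (π : DiagAut) (i : Fin 26),
      ((F π : V ≃ₗ[ℂ] V)) (droot i) = droot ((π : Equiv.Perm (Fin 26)) i) := by
  obtain ⟨F, hF⟩ := exists_monoidHom_linearEquiv_of_gram_invariant span_droot_eq_top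
    hermForm_separatingRight herm_droot_diagAut
  exact ⟨F.codRestrict AutL fun π => mem_AutL_of_permutes_droot (hF π), hF⟩

end Bimonster
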